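/- arXiv:2108.03947 — 7 statements merged into one kernel-verified Lean document; each statement's English description precedes it below -/
import Mathlib

section
/- Let f : ℝ^d → ℝ be a smooth confining function that is not constant, and suppose that for every β > 0 the functions exp(−2f/β), f·exp(−2f/β) and f²·exp(−2f/β) are Lebesgue integrable on ℝ^d. Then the Gibbs mean G(β) = (∫_{ℝ^d} f(x) exp(−2f(x)/β) dx) / (∫_{ℝ^d} exp(−2f(x)/β) dx) is a strictly increasing function of β on (0, ∞). -/
open MeasureTheory Filter

/-!
A Chebyshev-type argument comparing two temperatures `a < b`. Write `w_β = e^{-2f/β}` and let `m` be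
the Gibbs mean at `a`, so that `∫ (f - m) w_a = 0`. With `h = e^{2m(1/a - 1/b)}` the ratio
`w_b / w_a = e^{2f(1/a - 1/b)}` exceeds `h` exactly where `f > m`, so `(f - m)(w_b - h w_a)` is
nonnegative and vanishes only where `f = m`. It is continuous, and not identically zero because `f`
is not constant, so its integral, which equals `∫ (f - m) w_b`, is positive. Hence the Gibbs mean
at `b` exceeds `m`.
-/

/-- The pointwise sign fact behind the comparison: `t - m` and `e^{-2t/b} - h e^{-2t/a}`, where
`h = e^{2m/a - 2m/b}`, have the same strict sign for `t ≠ m`. -/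
lemma gibbs_weight_sign {a b : ℝ} (ha : 0 < a) (hab : a < b) {t m : ℝ} (htm : t ≠ m) :
    0 < (t - m) * (Real.exp (-2 * t / b) -
      Real.exp (2 * m / a - 2 * m / b) * Real.exp (-2 * t / a)) := by
  have hinv : 0 < 1 / a - 1 / b := sub_pos.mpr (one_div_lt_one_div_of_lt ha hab)
  have key : -2 * t / b - (2 * m / a - 2 * m / b + -2 * t / a) =
      2 * ((t - m) * (1 / a - 1 / b)) := by ring
  rw [← Real.exp_add]
  rcases lt_or_gt_of_ne htm with h | h
  · have := mul_neg_of_neg_of_pos (sub_neg.mpr h) hinv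
    exact mul_pos_of_neg_of_neg (sub_neg.mpr h)
      (sub_neg.mpr (Real.exp_lt_exp.mpr (by linarith)))
  · have := mul_pos (sub_pos.mpr h) hinv
    exact mul_pos (sub_pos.mpr h) (sub_pos.mpr (Real.exp_lt_exp.mpr (by linarith)))

/-- The Gibbs mean `β ↦ (∫ f e^{-2f/β}) / (∫ e^{-2f/β})` is strictly increasing in `β`
for a smooth, confining, non-constant potential `f`. -/
theorem gibbs_mean_strictMonoOn {d : ℕ} (f : EuclideanSpace ℝ (Fin d) → ℝ)
    (hf_smooth : ContDiff ℝ (⊤ : ℕ∞) f)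
    (hf_conf : Tendsto f (cocompact (EuclideanSpace ℝ (Fin d))) atTop)
    (hf_nonconst : ¬ ∃ c : ℝ, ∀ x, f x = c)
    (hint0 : ∀ β : ℝ, 0 < β → Integrable (fun x => Real.exp (-2 * f x / β)))
    (hint1 : ∀ β : ℝ, 0 < β → Integrable (fun x => f x * Real.exp (-2 * f x / β)))
    (hint2 : ∀ β : ℝ, 0 < β → Integrable (fun x => (f x) ^ 2 * Real.exp (-2 * f x / β))) :
    StrictMonoOn (fun β : ℝ => (∫ x, f x * Real.exp (-2 * f x / β)) /
      (∫ x, Real.exp (-2 * f x / β))) (Set.Ioi (0 : ℝ)) := by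
  intro a ha b hb hab
  have ha : 0 < a := ha
  have hb : 0 < b := hb
  have hcont : Continuous f := hf_smooth.continuous
  have hZ : ∀ β : ℝ, 0 < β → 0 < ∫ x, Real.exp (-2 * f x / β) := fun β hβ =>
    integral_exp_pos (hint0 β hβ)
  change (∫ x, f x * Real.exp (-2 * f x / a)) / (∫ x, Real.exp (-2 * f x / a)) <
    (∫ x, f x * Real.exp (-2 * f x / b)) / (∫ x, Real.exp (-2 * f x / b))
  set m := (∫ x, f x * Real.exp (-2 * f x / a)) / (∫ x, Real.exp (-2 * f x / a)) with hm
  have hma : (∫ x, f x * Real.exp (-2 * f x / a)) - m * ∫ x, Real.exp (-2 * f x / a) = 0 := by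
    rw [hm, div_mul_cancel₀ _ (hZ a ha).ne', sub_self]
  rw [lt_div_iff₀ (hZ b hb)]
  set h := Real.exp (2 * m / a - 2 * m / b) with hh
  obtain ⟨x₀, hx₀⟩ : ∃ x, f x ≠ m := by
    by_contra! hc
    exact hf_nonconst ⟨m, hc⟩
  have hI : ∀ β : ℝ, 0 < β →
      Integrable (fun x => f x * Real.exp (-2 * f x / β) - m * Real.exp (-2 * f x / β)) :=
    fun β hβ => (hint1 β hβ).sub ((hint0 β hβ).const_mul m)
  have hJ : ∀ β : ℝ, 0 < β →
      ∫ x, (f x * Real.exp (-2 * f x / β) - m * Real.exp (-2 * f x / β)) =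
        (∫ x, f x * Real.exp (-2 * f x / β)) - m * ∫ x, Real.exp (-2 * f x / β) := by
    intro β hβ
    rw [integral_sub (hint1 β hβ) ((hint0 β hβ).const_mul m), integral_const_mul]
  have hexpand : (fun x => (f x - m) * (Real.exp (-2 * f x / b) - h * Real.exp (-2 * f x / a))) =
      fun x => (f x * Real.exp (-2 * f x / b) - m * Real.exp (-2 * f x / b)) -
        h * (f x * Real.exp (-2 * f x / a) - m * Real.exp (-2 * f x / a)) := by
    funext x
    ring
  have hpos : 0 < ∫ x, (f x - m) *
      (Real.exp (-2 * f x / b) - h * Real.exp (-2 * f x / a)) := by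
    refine integral_pos_of_integrable_nonneg_nonzero (x := x₀) (by fun_prop) ?_ ?_
      (gibbs_weight_sign ha hab hx₀).ne'
    · rw [hexpand]
      exact (hI b hb).sub ((hI a ha).const_mul h)
    · intro x
      by_cases hx : f x = m
      · simp [hx]
      · exact (gibbs_weight_sign ha hab hx).le
  rw [hexpand, integral_sub (hI b hb) ((hI a ha).const_mul h), integral_const_mul,
    hJ b hb, hJ a ha, hma] at hpos
  linarith
end

section
/- Let f : ℝ^d → ℝ be a smooth confining Morse function (every critical point of f has nondegenerate Hessian) attaining its infimum f* = inf_{x∈ℝ^d} f(x). Then for every B > 0 there exists a constant A > 0, depending only on B and f, such that for all 0 < β ≤ B: 0 ≤ (∫_{ℝ^d} f(x) exp(−2f(x)/β) dx) / (∫_{ℝ^d} exp(−2f(x)/β) dx) − f* ≤ A·β. -/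
/-!
Put `g = f - f xstar ≥ 0` and `Z t = ∫ exp (-t g)`. With `t = 2 / β`, the excess risk is
`∫ g exp (-t g) / Z t`. Since `u ≤ exp u`, the pointwise bound
`g exp (-(2 / β) g) ≤ β exp (-(1 / β) g)` reduces the claim to the doubling estimate
`Z (1 / β) ≤ A Z (2 / β)`, which follows once `Z t` lies between two multiples of `t ^ (-d / 2)` for
all `t ≥ 1 / B` (`Z_lower` and `Z_upper`).

The lower bound on `Z` only needs `g x ≤ L ‖x - xstar‖²` near `xstar`. The upper bound comes from
`c ‖x - p‖² ≤ g x` near every point `p` (`quad_lower_all`), compactness of the region where `g` is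
small, and exponential decay elsewhere. At a minimiser the quadratic lower bound is where the Morse
hypothesis enters (`quad_lower`): nonnegativity of `g` and a Lipschitz gradient give
`‖∇g‖² ≤ 4 L g`, and invertibility of the Hessian gives `‖x - p‖ ≤ C ‖∇g x‖`. Neither
diagonalisation of the Hessian nor finiteness of the set of minimisers is required.
-/

open MeasureTheory Filter

/-- Quadratic upper bound near `p` from the local Lipschitz continuity of the gradient. The mean
value inequality yields the constant `L` instead of the sharp `L / 2`, which is enough here. -/
theorem descent {d : ℕ} (f : EuclideanSpace ℝ (Fin d) → ℝ) (hf : ContDiff ℝ (⊤ : ℕ∞) f)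
    (p : EuclideanSpace ℝ (Fin d)) :
    ∃ L > 0, ∃ r > 0, ∀ x ∈ Metric.ball p r, ∀ y ∈ Metric.ball p r,
      ‖gradient f y - gradient f x‖ ≤ L * ‖y - x‖ ∧
      f y ≤ f x + inner ℝ (gradient f x) (y - x) + L * ‖y - x‖ ^ 2 := by
  have hdf : ContDiff ℝ 1 (fderiv ℝ f) :=
    hf.fderiv_right (by norm_cast)
  obtain ⟨K, t, ht, hK⟩ := (hdf.contDiffAt (x := p)).exists_lipschitzOnWith
  obtain ⟨r, hr, hrt⟩ := Metric.mem_nhds_iff.1 ht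
  have hlip : ∀ x ∈ Metric.ball p r, ∀ y ∈ Metric.ball p r,
      ‖fderiv ℝ f y - fderiv ℝ f x‖ ≤ (K + 1) * ‖y - x‖ := by
    intro x hx y hy
    have := hK.dist_le_mul y (hrt hy) x (hrt hx)
    rw [dist_eq_norm, dist_eq_norm] at this
    nlinarith [norm_nonneg (y - x)]
  have hKpos : (0 : ℝ) < K + 1 := by positivity
  refine ⟨K + 1, hKpos, r, hr, fun x hx y hy => ⟨?_, ?_⟩⟩
  · have : gradient f y - gradient f x
        = (InnerProductSpace.toDual ℝ _).symm (fderiv ℝ f y - fderiv ℝ f x) := by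
      simp [gradient]
    rw [this, LinearIsometryEquiv.norm_map]
    exact hlip x hx y hy
  · have := Convex.norm_image_sub_le_of_norm_hasFDerivWithin_le'
      (f := f) (f' := fderiv ℝ f) (φ := fderiv ℝ f x) (C := (K + 1) * ‖y - x‖) (x := x) (y := y)
      (s := Metric.ball p r ∩ Metric.closedBall x ‖y - x‖)
      (fun z _ => ((hf.differentiable (by simp)) z).hasFDerivAt.hasFDerivWithinAt)
      (fun z hz => (hlip x hx z hz.1).trans (by
        have := hz.2
        rw [Metric.mem_closedBall, dist_eq_norm] at this
        gcongr))
      ((convex_ball p r).inter (convex_closedBall x _))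
      ⟨hx, by simp⟩ ⟨hy, by simp [dist_eq_norm]⟩
    rw [inner_gradient_left]
    have h2 := (le_abs_self _).trans this
    nlinarith

theorem gradient_eq_zero_of_min {d : ℕ} (f : EuclideanSpace ℝ (Fin d) → ℝ)
    (p : EuclideanSpace ℝ (Fin d)) (hp : ∀ x, f p ≤ f x) : gradient f p = 0 := by
  have : fderiv ℝ f p = 0 := IsLocalMin.fderiv_eq_zero (Eventually.of_forall hp)
  simp [gradient, this]

/-- Quadratic growth at a nondegenerate global minimiser. A gradient step of length `1 / (2 L)` from
`x` lowers `f` by at least `‖∇f x‖² / (4 L)` and cannot go below `f p`, so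
`‖∇f x‖² ≤ 4 L (f x - f p)`; and `‖∇f x‖` dominates a multiple of `‖x - p‖` because the derivative
of `∇f` at `p` is invertible. -/
theorem quad_lower {d : ℕ} (f : EuclideanSpace ℝ (Fin d) → ℝ) (hf : ContDiff ℝ (⊤ : ℕ∞) f)
    (p : EuclideanSpace ℝ (Fin d)) (hp : ∀ x, f p ≤ f x)
    (hb : Function.Bijective (fderiv ℝ (gradient f) p)) :
    ∃ c > 0, ∀ᶠ x in nhds p, c * ‖x - p‖ ^ 2 ≤ f x - f p := by
  obtain ⟨L, hL, r, hr, hd⟩ := descent f hf p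
  have hdf : ContDiff ℝ 1 (fderiv ℝ f) := hf.fderiv_right (by norm_cast)
  have hdg : DifferentiableAt ℝ (gradient f) p :=
    ((InnerProductSpace.toDual ℝ (EuclideanSpace ℝ (Fin d))).symm.differentiable _).comp p
      (hdf.differentiable (by simp) p)
  let e := ContinuousLinearEquiv.ofBijective (fderiv ℝ (gradient f) p)
    (LinearMap.ker_eq_bot.2 hb.1) (LinearMap.range_eq_top.2 hb.2)
  set H := fderiv ℝ (gradient f) p with hH
  set M : ℝ := ‖(e.symm : EuclideanSpace ℝ (Fin d) →L[ℝ] EuclideanSpace ℝ (Fin d))‖₊ + 1 with hMdef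
  have hM : 0 < M := by positivity
  have hanti : ∀ v, ‖v‖ ≤ M * ‖H v‖ := by
    intro v
    have h1 : ‖v‖ ≤ ‖(e.symm : EuclideanSpace ℝ (Fin d) →L[ℝ] EuclideanSpace ℝ (Fin d))‖₊
        * ‖H v‖ := by
      have he : e v = H v := rfl
      simpa [he] using e.antilipschitz.le_mul_dist v 0
    nlinarith [norm_nonneg (H v)]
  have hgp := gradient_eq_zero_of_min f p hp
  have hlo := (hasFDerivAt_iff_isLittleO.1 hdg.hasFDerivAt).def (c := 1 / (2 * M)) (by positivity)
  refine ⟨1 / (16 * M ^ 2 * L), by positivity, ?_⟩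
  filter_upwards [hlo, Metric.ball_mem_nhds p (half_pos hr)] with x hx hxr
  rw [hgp, sub_zero] at hx
  rw [Metric.mem_ball, dist_eq_norm] at hxr
  set G := gradient f x with hG
  have hxG : ‖x - p‖ ≤ 2 * M * ‖G‖ := by
    have h1 := hanti (x - p)
    have h2 : ‖H (x - p)‖ ≤ ‖G‖ + 1 / (2 * M) * ‖x - p‖ := by
      have := norm_sub_le G (G - H (x - p))
      rw [sub_sub_cancel] at this
      linarith
    have h3 : M * ‖H (x - p)‖ ≤ M * ‖G‖ + ‖x - p‖ / 2 := by
      calc M * ‖H (x - p)‖ ≤ M * (‖G‖ + 1 / (2 * M) * ‖x - p‖) := by gcongr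
        _ = _ := by field_simp
    linarith
  have hxm : x ∈ Metric.ball p r := by
    rw [Metric.mem_ball, dist_eq_norm]; linarith
  have hGx : ‖G‖ ≤ L * ‖x - p‖ := by
    have := (hd p (Metric.mem_ball_self hr) x hxm).1
    rwa [hgp, sub_zero] at this
  have hym : x - (1 / (2 * L)) • G ∈ Metric.ball p r := by
    rw [Metric.mem_ball, dist_eq_norm]
    have h1 : ‖x - (1 / (2 * L)) • G - p‖ ≤ ‖x - p‖ + 1 / (2 * L) * ‖G‖ := by
      have := norm_sub_le (x - p) ((1 / (2 * L)) • G)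
      rw [norm_smul, Real.norm_of_nonneg (by positivity)] at this
      rwa [sub_right_comm]
    have h2 : 1 / (2 * L) * ‖G‖ ≤ ‖x - p‖ / 2 := by
      calc 1 / (2 * L) * ‖G‖ ≤ 1 / (2 * L) * (L * ‖x - p‖) := by gcongr
        _ = _ := by field_simp
    linarith
  have hstep := (hd x hxm _ hym).2
  have hlow : ‖G‖ ^ 2 / (4 * L) ≤ f x - f p := by
    have e1 : x - (1 / (2 * L)) • G - x = -((1 / (2 * L)) • G) := by abel
    rw [e1, inner_neg_right, inner_smul_right, real_inner_self_eq_norm_sq, norm_neg, norm_smul,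
      Real.norm_of_nonneg (by positivity)] at hstep
    have e2 : -(1 / (2 * L) * ‖G‖ ^ 2) + L * (1 / (2 * L) * ‖G‖) ^ 2 = - (‖G‖ ^ 2 / (4 * L)) := by
      field_simp; ring
    linarith [hp (x - (1 / (2 * L)) • G)]
  refine le_trans ?_ hlow
  calc 1 / (16 * M ^ 2 * L) * ‖x - p‖ ^ 2 ≤ 1 / (16 * M ^ 2 * L) * (2 * M * ‖G‖) ^ 2 := by gcongr
    _ = _ := by field_simp; ring

theorem quad_upper {d : ℕ} (f : EuclideanSpace ℝ (Fin d) → ℝ) (hf : ContDiff ℝ (⊤ : ℕ∞) f)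
    (p : EuclideanSpace ℝ (Fin d)) (hp : ∀ x, f p ≤ f x) :
    ∃ L > 0, ∃ r > 0, ∀ x ∈ Metric.ball p r, f x - f p ≤ L * ‖x - p‖ ^ 2 := by
  obtain ⟨L, hL, r, hr, hd⟩ := descent f hf p
  refine ⟨L, hL, r, hr, fun x hx => ?_⟩
  have := (hd p (Metric.mem_ball_self hr) x hx).2
  rw [gradient_eq_zero_of_min f p hp, inner_zero_left] at this
  linarith

/-- The quadratic lower bound holds around every point `p`, with `f q` the minimum value: if `p` is
not a minimiser, then `f - f q` is bounded away from zero near `p`. -/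
theorem quad_lower_all {d : ℕ} (f : EuclideanSpace ℝ (Fin d) → ℝ) (hf : ContDiff ℝ (⊤ : ℕ∞) f)
    (hm : ∀ x, gradient f x = 0 → Function.Bijective (fderiv ℝ (gradient f) x))
    (q : EuclideanSpace ℝ (Fin d)) (hq : ∀ x, f q ≤ f x) (p : EuclideanSpace ℝ (Fin d)) :
    ∃ c > 0, ∀ᶠ x in nhds p, c * ‖x - p‖ ^ 2 ≤ f x - f q := by
  rcases (hq p).eq_or_lt with h | h
  · rw [h]
    have hp : ∀ x, f p ≤ f x := fun x => h ▸ hq x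
    exact quad_lower f hf p hp (hm p (gradient_eq_zero_of_min f p hp))
  · refine ⟨1, one_pos, ?_⟩
    have h1 : ContinuousAt (fun x => f x - f q - 1 * ‖x - p‖ ^ 2) p := by
      have := hf.continuous
      fun_prop
    filter_upwards [h1.eventually_const_lt (u := 0) (by simpa using h)] with x hx
    linarith

theorem gauss_bound {d : ℕ} {c : ℝ} (hc : 0 < c) (p : EuclideanSpace ℝ (Fin d))
    {t : ℝ} (ht : 0 < t) :
    ∫⁻ x, ENNReal.ofReal (Real.exp (-t * (c * ‖x - p‖ ^ 2)))
      = ENNReal.ofReal (√(Real.pi / c) ^ d * (√t)⁻¹ ^ d) := by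
  have hb : 0 < t * c := by positivity
  have h := GaussianFourier.integral_rexp_neg_mul_sq_norm (V := EuclideanSpace ℝ (Fin d)) hb
  have hi : Integrable (fun v : EuclideanSpace ℝ (Fin d) => Real.exp (-(t * c) * ‖v‖ ^ 2)) := by
    apply Integrable.of_integral_ne_zero
    rw [h]; positivity
  rw [lintegral_sub_right_eq_self
    (fun x => ENNReal.ofReal (Real.exp (-t * (c * ‖x‖ ^ 2)))) p]
  simp_rw [show ∀ x : EuclideanSpace ℝ (Fin d), -t * (c * ‖x‖ ^ 2) = -(t * c) * ‖x‖ ^ 2 from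
    fun x => by ring]
  rw [← ofReal_integral_eq_lintegral_ofReal hi (Eventually.of_forall fun x => (Real.exp_pos _).le), h]
  congr 1
  rw [finrank_euclideanSpace_fin, ← mul_pow, ← Real.sqrt_inv, ← Real.sqrt_mul (by positivity),
    Real.sqrt_eq_rpow, ← Real.rpow_natCast, ← Real.rpow_mul (by positivity)]
  congr 1
  · field_simp
  · ring

/-- Exponential decay beats the power `t ^ (-d / 2)`, written as `(√t)⁻¹ ^ d`. -/
theorem exp_bound (d : ℕ) {t : ℝ} (ht : 0 < t) :
    Real.exp (-t) ≤ (d.factorial * Real.exp 1) * (√t)⁻¹ ^ d := by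
  have h1 := Real.pow_div_factorial_le_exp (√t) (Real.sqrt_nonneg t) d
  have h2 : √t ≤ 1 + t := by nlinarith [Real.sq_sqrt ht.le, sq_nonneg (√t - 1)]
  have h3 : √t ^ d ≤ d.factorial * (Real.exp 1 * Real.exp t) := by
    rw [← Real.exp_add]
    rw [div_le_iff₀ (by positivity)] at h1
    have := Real.exp_le_exp.2 h2
    nlinarith [show (0 : ℝ) < d.factorial by positivity]
  rw [Real.exp_neg, inv_pow, ← div_eq_mul_inv, le_div_iff₀ (by positivity), inv_mul_le_iff₀ (by positivity)]
  linarith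

/-- Upper half of Laplace's asymptotics. A compact set off which `f ≥ f q + 1` is covered by finitely
many balls on which a Gaussian dominates the integrand; off that set the integrand is
exponentially small in `t`. -/
theorem Z_upper {d : ℕ} (f : EuclideanSpace ℝ (Fin d) → ℝ) (hf : ContDiff ℝ (⊤ : ℕ∞) f)
    (hconf : Tendsto f (cocompact (EuclideanSpace ℝ (Fin d))) atTop)
    (hm : ∀ x, gradient f x = 0 → Function.Bijective (fderiv ℝ (gradient f) x))
    (q : EuclideanSpace ℝ (Fin d)) (hq : ∀ x, f q ≤ f x)
    (hi : ∀ t : ℝ, 0 < t → Integrable (fun x => Real.exp (-t * (f x - f q))))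
    {t₀ : ℝ} (ht₀ : 0 < t₀) :
    ∃ C ≥ 0, ∀ t ≥ t₀, ∫ x, Real.exp (-t * (f x - f q)) ≤ C * (√t)⁻¹ ^ d := by
  let P : Set (EuclideanSpace ℝ (Fin d)) → Prop := fun s => ∃ C : ℝ, 0 ≤ C ∧ ∀ t ≥ t₀,
    ∫⁻ x in s, ENNReal.ofReal (Real.exp (-t * (f x - f q))) ≤ ENNReal.ofReal (C * (√t)⁻¹ ^ d)
  have hunion : ∀ ⦃s t⦄, P s → P t → P (s ∪ t) := by
    rintro s u ⟨C, hC, h⟩ ⟨D, hD, h'⟩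
    refine ⟨C + D, by positivity, fun t ht => (lintegral_union_le _ _ _).trans ?_⟩
    rw [add_mul, ENNReal.ofReal_add (by positivity) (by positivity)]
    exact add_le_add (h t ht) (h' t ht)
  obtain ⟨T, hT, hTf⟩ := mem_cocompact.1 (hconf.eventually_ge_atTop (f q + 1))
  -- Gaussian bounds on small balls, glued by compactness.
  have hPT : P T := by
    refine hT.induction_on ⟨0, le_rfl, by simp⟩ ?_ hunion ?_
    · rintro s u hsu ⟨C, hC, h⟩
      exact ⟨C, hC, fun t ht => (lintegral_mono_set hsu).trans (h t ht)⟩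
    · intro p _
      obtain ⟨c, hc, hcp⟩ := quad_lower_all f hf hm q hq p
      obtain ⟨r, hr, hrs⟩ := Metric.mem_nhds_iff.1 hcp
      refine ⟨Metric.ball p r, mem_nhdsWithin_of_mem_nhds (Metric.ball_mem_nhds p hr),
        √(Real.pi / c) ^ d, by positivity, fun t ht => ?_⟩
      have htp : 0 < t := ht₀.trans_le ht
      rw [← gauss_bound hc p htp]
      refine le_trans (setLIntegral_mono' measurableSet_ball fun x hx => ?_)
        (setLIntegral_le_lintegral (Metric.ball p r) _)
      have := hrs hx
      apply ENNReal.ofReal_le_ofReal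
      apply Real.exp_le_exp.2
      have : t * (c * ‖x - p‖ ^ 2) ≤ t * (f x - f q) := by gcongr; exact this
      linarith
  have hPTc : P Tᶜ := by
    set I := ∫ x, Real.exp (-t₀ * (f x - f q)) with hI
    have hI0 : 0 ≤ I := integral_nonneg fun x => (Real.exp_pos _).le
    refine ⟨Real.exp t₀ * (d.factorial * Real.exp 1) * I, by positivity, fun t ht => ?_⟩
    have htp : 0 < t := ht₀.trans_le ht
    calc ∫⁻ x in Tᶜ, ENNReal.ofReal (Real.exp (-t * (f x - f q)))
        ≤ ∫⁻ x in Tᶜ, ENNReal.ofReal (Real.exp (t₀ - t) * Real.exp (-t₀ * (f x - f q))) := by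
          refine setLIntegral_mono' hT.measurableSet.compl fun x hx => ?_
          apply ENNReal.ofReal_le_ofReal
          rw [← Real.exp_add]
          apply Real.exp_le_exp.2
          have h1 : f q + 1 ≤ f x := hTf hx
          nlinarith
      _ ≤ ∫⁻ x, ENNReal.ofReal (Real.exp (t₀ - t) * Real.exp (-t₀ * (f x - f q))) :=
          setLIntegral_le_lintegral _ _
      _ = ENNReal.ofReal (Real.exp (t₀ - t) * I) := by
          rw [← ofReal_integral_eq_lintegral_ofReal ((hi t₀ ht₀).const_mul _)
            (Eventually.of_forall fun x => by positivity), integral_const_mul]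
      _ ≤ _ := by
          apply ENNReal.ofReal_le_ofReal
          have := exp_bound d htp
          rw [sub_eq_add_neg, Real.exp_add]
          calc Real.exp t₀ * Real.exp (-t) * I
              ≤ Real.exp t₀ * ((d.factorial * Real.exp 1) * (√t)⁻¹ ^ d) * I := by gcongr
            _ = _ := by ring
  obtain ⟨C, hC, h⟩ := hunion hPT hPTc
  refine ⟨C, hC, fun t ht => ?_⟩
  have := h t ht
  rw [Set.union_compl_self, setLIntegral_univ, ← ofReal_integral_eq_lintegral_ofReal
    (hi t (ht₀.trans_le ht)) (Eventually.of_forall fun x => (Real.exp_pos _).le)] at this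
  exact (ENNReal.ofReal_le_ofReal_iff (by positivity)).1 this

/-- Lower half of Laplace's asymptotics: on the ball of radius proportional to `1 / √t` around the
minimiser, the exponent `t * (f x - f q)` stays bounded. -/
theorem Z_lower {d : ℕ} (f : EuclideanSpace ℝ (Fin d) → ℝ) (hf : ContDiff ℝ (⊤ : ℕ∞) f)
    (q : EuclideanSpace ℝ (Fin d)) (hq : ∀ x, f q ≤ f x)
    (hi : ∀ t : ℝ, 0 < t → Integrable (fun x => Real.exp (-t * (f x - f q))))
    {t₀ : ℝ} (ht₀ : 0 < t₀) :
    ∃ c > 0, ∀ t ≥ t₀, c * (√t)⁻¹ ^ d ≤ ∫ x, Real.exp (-t * (f x - f q)) := by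
  obtain ⟨L, hL, r, hr, h⟩ := quad_upper f hf q hq
  set v := volume.real (Metric.ball (0 : EuclideanSpace ℝ (Fin d)) 1) with hv
  have hvpos : 0 < v :=
    ENNReal.toReal_pos (Metric.measure_ball_pos _ _ one_pos).ne' measure_ball_lt_top.ne
  refine ⟨(r * √t₀) ^ d * v * Real.exp (-(L * r ^ 2 * t₀)), by positivity, fun t ht => ?_⟩
  have htp : 0 < t := ht₀.trans_le ht
  set ρ := r * √t₀ * (√t)⁻¹ with hρ
  have hρ0 : 0 < ρ := by positivity
  have hρr : ρ ≤ r := by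
    rw [hρ, mul_assoc, ← div_eq_mul_inv]
    exact mul_le_of_le_one_right hr.le (div_le_one_of_le₀ (Real.sqrt_le_sqrt ht) (by positivity))
  have hvol : volume.real (Metric.ball q ρ) = ρ ^ d * v := by
    rw [hv, measureReal_def, measureReal_def, Measure.addHaar_ball_of_pos _ _ hρ0,
      ENNReal.toReal_mul, ENNReal.toReal_ofReal (by positivity), finrank_euclideanSpace_fin]
  have hρ2 : t * (L * ρ ^ 2) = L * r ^ 2 * t₀ := by
    rw [hρ, mul_pow, mul_pow, inv_pow, Real.sq_sqrt htp.le, Real.sq_sqrt ht₀.le]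
    field_simp
  calc (r * √t₀) ^ d * v * Real.exp (-(L * r ^ 2 * t₀)) * (√t)⁻¹ ^ d
      = ∫ x in Metric.ball q ρ, Real.exp (-(L * r ^ 2 * t₀)) := by
        rw [setIntegral_const, hvol, hρ, smul_eq_mul]; ring
    _ ≤ ∫ x in Metric.ball q ρ, Real.exp (-t * (f x - f q)) := by
        refine setIntegral_mono_on (integrableOn_const (by exact measure_ball_lt_top.ne))
          (hi t htp).integrableOn measurableSet_ball fun x hx => ?_
        apply Real.exp_le_exp.2
        have h1 := h x (Metric.ball_subset_ball hρr hx)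
        rw [Metric.mem_ball, dist_eq_norm] at hx
        have h2 : t * (f x - f q) ≤ t * (L * ρ ^ 2) := by
          gcongr
          exact h1.trans (by gcongr)
        linarith
    _ ≤ _ := setIntegral_le_integral (hi t htp) (Eventually.of_forall fun x => (Real.exp_pos _).le)

/-- For a smooth confining Morse function `f` attaining its infimum `f* = f xstar`,
for every `B > 0` there is `A > 0` (depending only on `B` and `f`) such that the Gibbs
excess risk satisfies `0 ≤ G(β) - f* ≤ A β` for all `0 < β ≤ B`. -/
theorem gibbs_gap_linear {d : ℕ} (f : EuclideanSpace ℝ (Fin d) → ℝ)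
    (hf_smooth : ContDiff ℝ (⊤ : ℕ∞) f)
    (hf_conf : Tendsto f (cocompact (EuclideanSpace ℝ (Fin d))) atTop)
    (hint0 : ∀ β : ℝ, 0 < β → Integrable (fun x => Real.exp (-2 * f x / β)))
    (hf_morse : ∀ x, gradient f x = 0 → Function.Bijective (fderiv ℝ (gradient f) x))
    (xstar : EuclideanSpace ℝ (Fin d)) (hxstar : ∀ x, f xstar ≤ f x) :
    ∀ B : ℝ, 0 < B → ∃ A : ℝ, 0 < A ∧ ∀ β : ℝ, 0 < β → β ≤ B →
      0 ≤ (∫ x, f x * Real.exp (-2 * f x / β)) / (∫ x, Real.exp (-2 * f x / β)) - f xstar ∧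
      (∫ x, f x * Real.exp (-2 * f x / β)) / (∫ x, Real.exp (-2 * f x / β)) - f xstar
        ≤ A * β := by
  intro B hB
  have hi : ∀ t : ℝ, 0 < t → Integrable (fun x => Real.exp (-t * (f x - f xstar))) := by
    intro t ht
    convert (hint0 (2 / t) (by positivity)).const_mul (Real.exp (t * f xstar)) using 2 with x
    rw [← Real.exp_add]
    congr 1
    field_simp
    ring
  have ht₀ : 0 < 1 / B := by positivity
  obtain ⟨C, hC, hup⟩ := Z_upper f hf_smooth hf_conf hf_morse xstar hxstar hi ht₀
  obtain ⟨c, hc, hlow⟩ := Z_lower f hf_smooth xstar hxstar hi ht₀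
  refine ⟨C * √2 ^ d / c + 1, by positivity, fun β hβ hβB => ?_⟩
  set Z : ℝ → ℝ := fun t => ∫ x, Real.exp (-t * (f x - f xstar)) with hZ
  have hZpos : 0 < Z (2 / β) := integral_exp_pos (hi _ (by positivity))
  have hratio : Z (1 / β) ≤ C * √2 ^ d / c * Z (2 / β) := by
    have h1 : 1 / B ≤ 1 / β := by gcongr
    have h2 : 1 / B ≤ 2 / β := h1.trans (by gcongr; norm_num)
    have hs : √(2 / β) = √2 * √(1 / β) := by
      rw [← Real.sqrt_mul (by norm_num)]; congr 1; ring
    calc Z (1 / β) ≤ C * (√(1 / β))⁻¹ ^ d := hup _ h1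
      _ = C * √2 ^ d / c * (c * (√(2 / β))⁻¹ ^ d) := by
        rw [hs, mul_inv, mul_pow, inv_pow (√2)]
        field_simp
      _ ≤ _ := by gcongr; exact hlow _ h2
  -- This is `u ≤ exp u` at `u = (f x - f xstar) / β`; it costs half of the exponent.
  have hpt : ∀ x, (f x - f xstar) * Real.exp (-(2 / β) * (f x - f xstar))
      ≤ β * Real.exp (-(1 / β) * (f x - f xstar)) := by
    intro x
    have h1 : (f x - f xstar) / β ≤ Real.exp ((f x - f xstar) / β) := by
      linarith [Real.add_one_le_exp ((f x - f xstar) / β)]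
    have h2 : Real.exp (-(1 / β) * (f x - f xstar)) = Real.exp ((f x - f xstar) / β) *
        Real.exp (-(2 / β) * (f x - f xstar)) := by
      rw [← Real.exp_add]; congr 1; ring
    rw [h2, ← mul_assoc]
    gcongr
    rwa [div_le_iff₀' hβ] at h1
  have hgi : Integrable (fun x => (f x - f xstar) * Real.exp (-(2 / β) * (f x - f xstar))) := by
    refine ((hi (1 / β) (by positivity)).const_mul β).mono' ?_ (Eventually.of_forall fun x => ?_)
    · have := hf_smooth.continuous
      exact Continuous.aestronglyMeasurable (by fun_prop)
    · rw [Real.norm_of_nonneg (mul_nonneg (sub_nonneg.2 (hxstar x)) (Real.exp_pos _).le)]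
      exact hpt x
  set N := ∫ x, (f x - f xstar) * Real.exp (-(2 / β) * (f x - f xstar)) with hN
  have hN0 : 0 ≤ N :=
    integral_nonneg fun x => mul_nonneg (sub_nonneg.2 (hxstar x)) (Real.exp_pos _).le
  have hNle : N ≤ β * Z (1 / β) := by
    rw [hZ, ← integral_const_mul]
    exact integral_mono hgi ((hi (1 / β) (by positivity)).const_mul β) hpt
  set k := Real.exp (-(2 / β) * f xstar) with hk
  have hkpos : 0 < k := Real.exp_pos _
  have hexp : ∀ x, Real.exp (-2 * f x / β) = k * Real.exp (-(2 / β) * (f x - f xstar)) := by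
    intro x
    rw [hk, ← Real.exp_add]; congr 1; ring
  have hden : ∫ x, Real.exp (-2 * f x / β) = k * Z (2 / β) := by
    simp_rw [hexp]
    rw [integral_const_mul]
  have hnum : ∫ x, f x * Real.exp (-2 * f x / β) = k * (N + f xstar * Z (2 / β)) := by
    rw [hN, hZ, ← integral_const_mul, ← integral_add hgi ((hi _ (by positivity)).const_mul _),
      ← integral_const_mul]
    congr 1 with x
    rw [hexp]; ring
  have hgap : (∫ x, f x * Real.exp (-2 * f x / β)) / (∫ x, Real.exp (-2 * f x / β)) - f xstar
      = N / Z (2 / β) := by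
    rw [hden, hnum]; field_simp; ring
  rw [hgap]
  refine ⟨by positivity, ?_⟩
  rw [div_le_iff₀ hZpos]
  nlinarith [mul_le_mul_of_nonneg_left hratio hβ.le, mul_pos hβ hZpos]
end

section
/- Let f : ℝ^d → ℝ be twice continuously differentiable and suppose there exists C > 0 such that ‖∇²f(x)‖₂ ≤ C(1 + ‖∇f(x)‖) for all x ∈ ℝ^d, where ‖·‖₂ is the matrix operator 2-norm. Fix β > 0 and let ν be the measure on ℝ^d with density exp(−2f(x)/β), assumed finite. Then for every g ∈ C_c^∞(ℝ^d): ∫ ‖∇f(x)‖² g(x)² dν(x) ≤ κ₁ ( ∫ g(x)² dν(x) + ∫ ‖∇g(x)‖² dν(x) ), where κ₁ = max{ 2dCβ + 2d²C²β², 2β² }. -/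
/-!
The proof is integration by parts against the weight `w = e^{-2f/β}`. Since
`∇w = -(2/β) w ∇f`, the compactly supported `C¹` field `g² w ∇f` has divergence
`w (g² Δf + 2 g ⟨∇g, ∇f⟩ - (2/β) g² ‖∇f‖²)`, and the integral of a divergence vanishes
(`integral_div_eq_zero`, `div_weighted_gradient`).

The trace bound `Δf ≤ d ‖∇²f‖ ≤ d C (1 + ‖∇f‖)` and two applications of Young's inequality
absorb half of `‖∇f‖² g²` into the left-hand side, which gives the pointwise inequality
`‖∇f‖² g² w ≤ κ₁ (g² w + ‖∇g‖² w) - β div (g² w ∇f)` (the algebra is `young_absorb`).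
Integrating it yields the claim.
-/

open MeasureTheory

theorem integral_fderiv_apply_eq_zero {E : Type*} [NormedAddCommGroup E] [NormedSpace ℝ E]
    [FiniteDimensional ℝ E] [MeasurableSpace E] [BorelSpace E] (μ : Measure E)
    [μ.IsAddHaarMeasure] (φ : E → ℝ) (hφ : ContDiff ℝ 1 φ) (hs : HasCompactSupport φ) (v : E) :
    Integrable (fun x => fderiv ℝ φ x v) μ ∧ ∫ x, fderiv ℝ φ x v ∂μ = 0 := by
  have hint : Integrable (fun x => fderiv ℝ φ x v) μ := by
    refine Continuous.integrable_of_hasCompactSupport ?_ (hs.fderiv_apply ℝ v)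
    exact (hφ.continuous_fderiv one_ne_zero).clm_apply continuous_const
  refine ⟨hint, ?_⟩
  have h := integral_mul_fderiv_eq_neg_fderiv_mul_of_integrable (μ := μ) (𝕜 := ℝ)
    (f := fun _ : E => (1 : ℝ)) (g := φ) (v := v) (by simp) (by simpa using hint)
    (by simpa using hφ.continuous.integrable_of_hasCompactSupport hs) (by fun_prop)
    (fun x _ => hφ.differentiable one_ne_zero x)
  simpa using h

/-- Divergence theorem for compactly supported fields, the divergence being the sum of the
diagonal entries of the Jacobian. -/
theorem integral_div_eq_zero {d : ℕ} (F : EuclideanSpace ℝ (Fin d) → EuclideanSpace ℝ (Fin d))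
    (hF : ContDiff ℝ 1 F) (hs : HasCompactSupport F) :
    Integrable (fun x => ∑ i, fderiv ℝ F x (EuclideanSpace.single i 1) i) ∧
      ∫ x, ∑ i, fderiv ℝ F x (EuclideanSpace.single i 1) i = 0 := by
  have key : ∀ i : Fin d,
      Integrable (fun x => fderiv ℝ F x (EuclideanSpace.single i 1) i) ∧
      ∫ x, fderiv ℝ F x (EuclideanSpace.single i 1) i = 0 := by
    intro i
    have hderiv : ∀ x, fderiv ℝ (fun y => F y i) x (EuclideanSpace.single i 1)
        = fderiv ℝ F x (EuclideanSpace.single i 1) i := by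
      intro x
      have h1 : HasFDerivAt (fun y => F y i)
          ((EuclideanSpace.proj (𝕜 := ℝ) i).comp (fderiv ℝ F x)) x :=
        (EuclideanSpace.proj (𝕜 := ℝ) i).hasFDerivAt.comp x
          (hF.differentiable one_ne_zero x).hasFDerivAt
      rw [h1.fderiv]
      rfl
    have h := integral_fderiv_apply_eq_zero volume (fun y => F y i)
      ((EuclideanSpace.proj (𝕜 := ℝ) i).contDiff.comp hF)
      (hs.comp_left (g := fun y : EuclideanSpace ℝ (Fin d) => y i) rfl)
      (EuclideanSpace.single i 1)
    simpa only [hderiv] using h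
  refine ⟨integrable_finsetSum _ fun i _ => (key i).1, ?_⟩
  rw [integral_finsetSum _ fun i _ => (key i).1]
  exact Finset.sum_eq_zero fun i _ => (key i).2

theorem contDiff_gradient {d : ℕ} (f : EuclideanSpace ℝ (Fin d) → ℝ) (hf : ContDiff ℝ 2 f) :
    ContDiff ℝ 1 (gradient f) :=
  (InnerProductSpace.toDual ℝ (EuclideanSpace ℝ (Fin d))).symm.toContinuousLinearEquiv.contDiff.comp
    (hf.fderiv_right (m := 1) (by norm_num))

theorem sum_diag_le_card_mul_norm {d : ℕ}
    (A : EuclideanSpace ℝ (Fin d) →L[ℝ] EuclideanSpace ℝ (Fin d)) :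
    ∑ i, A (EuclideanSpace.single i 1) i ≤ d * ‖A‖ := by
  have h : ∀ i : Fin d, A (EuclideanSpace.single i 1) i ≤ ‖A‖ := by
    intro i
    calc A (EuclideanSpace.single i 1) i ≤ ‖A (EuclideanSpace.single i 1) i‖ := le_abs_self _
      _ ≤ ‖A (EuclideanSpace.single i 1)‖ := PiLp.norm_apply_le _ i
      _ ≤ ‖A‖ * ‖(EuclideanSpace.single i 1 : EuclideanSpace ℝ (Fin d))‖ := A.le_opNorm _
      _ = ‖A‖ := by simp
  calc ∑ i, A (EuclideanSpace.single i 1) i ≤ ∑ _i : Fin d, ‖A‖ :=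
        Finset.sum_le_sum fun i _ => h i
    _ = d * ‖A‖ := by simp

/-- The divergence of `g² e^{-2f/β} ∇f`. -/
theorem div_weighted_gradient {d : ℕ} (f g : EuclideanSpace ℝ (Fin d) → ℝ)
    (hf : ContDiff ℝ 2 f) (hg : ContDiff ℝ 1 g) (β : ℝ) (x : EuclideanSpace ℝ (Fin d)) :
    ∑ i, fderiv ℝ (fun y => (g y ^ 2 * Real.exp (-2 * f y / β)) • gradient f y) x
        (EuclideanSpace.single i 1) i =
      Real.exp (-2 * f x / β) *
        (g x ^ 2 * ∑ i, fderiv ℝ (gradient f) x (EuclideanSpace.single i 1) i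
          + 2 * g x * inner ℝ (gradient g x) (gradient f x)
          - 2 / β * g x ^ 2 * ‖gradient f x‖ ^ 2) := by
  have hfx : HasFDerivAt f (fderiv ℝ f x) x := (hf.differentiable two_ne_zero x).hasFDerivAt
  have hgx : HasFDerivAt g (fderiv ℝ g x) x := (hg.differentiable one_ne_zero x).hasFDerivAt
  have hG : HasFDerivAt (gradient f) (fderiv ℝ (gradient f) x) x :=
    ((contDiff_gradient f hf).differentiable one_ne_zero x).hasFDerivAt
  have hh := (hgx.pow 2).mul ((hfx.const_mul (-2)).mul_const β⁻¹).exp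
  simp only [← div_eq_mul_inv] at hh
  have hF := hh.smul hG
  have hsum : ∀ L : EuclideanSpace ℝ (Fin d) →L[ℝ] ℝ, ∀ u : EuclideanSpace ℝ (Fin d),
      ∑ i, L (EuclideanSpace.single i 1) * u i = L u := by
    intro L u
    conv_rhs => rw [← (EuclideanSpace.basisFun (Fin d) ℝ).sum_repr u]
    simp [mul_comm]
  have e1 : fderiv ℝ (fun y => (g y ^ 2 * Real.exp (-2 * f y / β)) • gradient f y) x = _ :=
    hF.fderiv
  rw [e1]
  have e2 := hsum (fderiv ℝ f x) (gradient f x)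
  have e3 := hsum (fderiv ℝ g x) (gradient f x)
  rw [← inner_gradient_left, real_inner_self_eq_norm_sq] at e2
  rw [← inner_gradient_left] at e3
  rw [← e2, ← e3]
  simp only [Finset.mul_sum, ← Finset.sum_add_distrib, ← Finset.sum_sub_distrib]
  refine Finset.sum_congr rfl fun i _ => ?_
  simp
  ring

/-- The terms with `‖∇f‖` are absorbed by Young's inequality. Here `a = ‖∇f‖`, `c = ‖∇g‖`,
`b = g`, `p = ⟨∇g, ∇f⟩`, `t = Δf` and `M = d C`. -/
theorem young_absorb (a b c p t M β : ℝ) (hM : 0 ≤ M) (hβ : 0 < β)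
    (ht : t ≤ M * (1 + a)) (hp : |p| ≤ c * a) :
    a ^ 2 * b ^ 2 ≤ max (2 * M * β + 2 * M ^ 2 * β ^ 2) (2 * β ^ 2) * (b ^ 2 + c ^ 2)
      - β * (b ^ 2 * t + 2 * b * p - 2 / β * b ^ 2 * a ^ 2) := by
  have h1 : β * (2 / β * b ^ 2 * a ^ 2) = 2 * (b ^ 2 * a ^ 2) := by field_simp
  have h2 : β * (b ^ 2 * t) ≤ β * (b ^ 2 * (M * (1 + a))) := by gcongr
  have h3 : b * p ≤ |b| * (c * a) := by
    calc b * p ≤ |b * p| := le_abs_self _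
      _ = |b| * |p| := abs_mul _ _
      _ ≤ _ := by gcongr
  have h3' : 2 * β * (b * p) ≤ 2 * β * (|b| * (c * a)) := by gcongr
  have h4 : 2 * β * (|b| * (c * a)) ≤ 1 / 2 * (b ^ 2 * a ^ 2) + 2 * β ^ 2 * c ^ 2 := by
    have := sq_nonneg (|b| * a - 2 * β * c)
    have hb := sq_abs b
    have : (|b| * a - 2 * β * c) ^ 2
      = b ^ 2 * a ^ 2 - 4 * β * (|b| * (c * a)) + 4 * β ^ 2 * c ^ 2 := by rw [← hb]; ring
    linarith
  have h5 : β * M * a * b ^ 2 ≤ 1 / 2 * (b ^ 2 * a ^ 2) + 1 / 2 * (M ^ 2 * β ^ 2) * b ^ 2 := by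
    have := sq_nonneg (b * (a - β * M))
    linarith
  have h6 : (2 * M * β + 2 * M ^ 2 * β ^ 2) * b ^ 2 ≤
      max (2 * M * β + 2 * M ^ 2 * β ^ 2) (2 * β ^ 2) * b ^ 2 := by
    gcongr; exact le_max_left _ _
  have h7 : 2 * β ^ 2 * c ^ 2 ≤
      max (2 * M * β + 2 * M ^ 2 * β ^ 2) (2 * β ^ 2) * c ^ 2 := by
    gcongr; exact le_max_right _ _
  have h8 : 0 ≤ M * β * b ^ 2 := by positivity
  have h9 : 0 ≤ M ^ 2 * β ^ 2 * b ^ 2 := by positivity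
  linarith

/-- Relative bound, part (i) (Villani's Lemma A.24): under the Villani condition
`‖∇²f(x)‖₂ ≤ C(1 + ‖∇f(x)‖)`, for every smooth compactly supported `g`,
`∫ ‖∇f‖² g² dν ≤ κ₁ (∫ g² dν + ∫ ‖∇g‖² dν)` with
`κ₁ = max (2dCβ + 2d²C²β²) (2β²)` and `dν = e^{-2f/β} dx`. -/
theorem relative_bound_i {d : ℕ} (f : EuclideanSpace ℝ (Fin d) → ℝ)
    (hf : ContDiff ℝ 2 f) (C : ℝ) (hC : 0 < C)
    (hvillani : ∀ x, ‖fderiv ℝ (gradient f) x‖ ≤ C * (1 + ‖gradient f x‖))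
    (β : ℝ) (hβ : 0 < β)
    (hν_fin : Integrable (fun x => Real.exp (-2 * f x / β)))
    (g : EuclideanSpace ℝ (Fin d) → ℝ) (hg : ContDiff ℝ (⊤ : ℕ∞) g)
    (hg_supp : HasCompactSupport g) :
    ∫ x, ‖gradient f x‖ ^ 2 * g x ^ 2 * Real.exp (-2 * f x / β) ≤
      max (2 * (d : ℝ) * C * β + 2 * (d : ℝ) ^ 2 * C ^ 2 * β ^ 2) (2 * β ^ 2) *
        ((∫ x, g x ^ 2 * Real.exp (-2 * f x / β)) +
          ∫ x, ‖gradient g x‖ ^ 2 * Real.exp (-2 * f x / β)) := by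
  have hg2 : ContDiff ℝ 2 g := contDiff_infty.1 hg 2
  have hg1 : ContDiff ℝ 1 g := contDiff_infty.1 hg 1
  have hGf := contDiff_gradient f hf
  have hcf := hf.continuous
  have hcg := hg.continuous
  have hcGf := hGf.continuous
  have hcGg := (contDiff_gradient g hg2).continuous
  have hf1 : ContDiff ℝ 1 f := hf.of_le (by norm_num)
  have hGg_supp : HasCompactSupport (gradient g) :=
    (hg_supp.fderiv ℝ).comp_left
      (g := (InnerProductSpace.toDual ℝ (EuclideanSpace ℝ (Fin d))).symm) (map_zero _)
  have i1 : Integrable (fun x => ‖gradient f x‖ ^ 2 * g x ^ 2 * Real.exp (-2 * f x / β)) := by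
    refine Continuous.integrable_of_hasCompactSupport (by fun_prop) (hg_supp.mono ?_)
    intro x hx hgx
    simp [hgx] at hx
  have i2 : Integrable (fun x => g x ^ 2 * Real.exp (-2 * f x / β)) := by
    refine Continuous.integrable_of_hasCompactSupport (by fun_prop) (hg_supp.mono ?_)
    intro x hx hgx
    simp [hgx] at hx
  have i3 : Integrable (fun x => ‖gradient g x‖ ^ 2 * Real.exp (-2 * f x / β)) := by
    refine Continuous.integrable_of_hasCompactSupport (by fun_prop) (hGg_supp.mono ?_)
    intro x hx hgx
    simp [hgx] at hx
  obtain ⟨i4, hdiv⟩ := integral_div_eq_zero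
    (fun y => (g y ^ 2 * Real.exp (-2 * f y / β)) • gradient f y) (by fun_prop)
    (hg_supp.mono (by
      intro x hx hgx
      simp [hgx] at hx))
  set κ := max (2 * (d : ℝ) * C * β + 2 * (d : ℝ) ^ 2 * C ^ 2 * β ^ 2) (2 * β ^ 2) with hκ
  have hκ' : max (2 * (d * C) * β + 2 * (d * C) ^ 2 * β ^ 2) (2 * β ^ 2) = κ := by
    rw [hκ]; congr 1; ring
  have hmono := integral_mono i1 (((i2.add i3).const_mul κ).sub (i4.const_mul β)) (by
    intro x
    have hy := young_absorb ‖gradient f x‖ (g x) ‖gradient g x‖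
      (inner ℝ (gradient g x) (gradient f x))
      (∑ i, fderiv ℝ (gradient f) x (EuclideanSpace.single i 1) i) (d * C) β (by positivity) hβ
      (by
        calc _ ≤ (d : ℝ) * ‖fderiv ℝ (gradient f) x‖ := sum_diag_le_card_mul_norm _
          _ ≤ d * (C * (1 + ‖gradient f x‖)) := by gcongr; exact hvillani x
          _ = _ := by ring)
      (abs_real_inner_le_norm _ _)
    rw [hκ'] at hy
    have := mul_le_mul_of_nonneg_right hy (Real.exp_pos (-2 * f x / β)).le
    simp only [Pi.sub_apply, Pi.add_apply]
    rw [div_weighted_gradient f g hf hg1 β x]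
    refine this.trans (le_of_eq ?_)
    ring)
  rw [integral_sub' ((i2.add i3).const_mul κ) (i4.const_mul β), integral_const_mul,
    integral_const_mul, hdiv, integral_add' i2 i3] at hmono
  simpa using hmono
end

section
/- Let f : ℝ^d → ℝ be twice continuously differentiable and suppose there exists C > 0 such that ‖∇²f(x)‖₂ ≤ C(1 + ‖∇f(x)‖) for all x ∈ ℝ^d, where ‖·‖₂ is the matrix operator 2-norm. Fix β > 0 and let ν be the measure on ℝ^d with density exp(−2f(x)/β), assumed finite. Then for every g ∈ C_c^∞(ℝ^d): ∫ ‖∇²f(x)‖₂² g(x)² dν(x) ≤ κ₂ ( ∫ g(x)² dν(x) + ∫ ‖∇g(x)‖² dν(x) ), where κ₂ = 2C²(1 + κ₁) and κ₁ = max{ 2dCβ + 2d²C²β², 2β² }. -/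
open MeasureTheory

/-!
Write `w = exp (-2f/β)`, so that `∇w = -(2/β) w ∇f`. The vector field `F = g² w ∇f` is `C¹` with
compact support, hence `∫ div F = 0`, where
`div F = w (2 g ⟪∇g, ∇f⟫ - (2/β) g² ‖∇f‖² + g² Δf)`.
Since `Δf ≤ d ‖∇²f‖ ≤ d C (1 + ‖∇f‖)`, Young's inequality gives the pointwise bound
`‖∇f‖² g² w ≤ κ₁ (g² + ‖∇g‖²) w - β div F`. Combined with
`‖∇²f‖² ≤ C² (1 + ‖∇f‖)² ≤ 2 C² (1 + ‖∇f‖²)`, this yields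
`‖∇²f‖² g² w ≤ κ₂ (g² + ‖∇g‖²) w - 2 C² β div F` (`pointwise_bound`), and integrating
removes the divergence term (`integral_fderiv_apply_eq_zero`).
-/

lemma contDiff_gradient_of_succ {d : ℕ} {f : EuclideanSpace ℝ (Fin d) → ℝ} {n : WithTop ℕ∞}
    (hf : ContDiff ℝ (n + 1) f) : ContDiff ℝ n (gradient f) := by
  have h : ContDiff ℝ n (fderiv ℝ f) := hf.fderiv_right le_rfl
  exact (InnerProductSpace.toDual ℝ (EuclideanSpace ℝ (Fin d))).symm.contDiff.comp h

lemma gradient_apply_eq_fderiv {d : ℕ} (f : EuclideanSpace ℝ (Fin d) → ℝ)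
    (x : EuclideanSpace ℝ (Fin d)) (i : Fin d) :
    fderiv ℝ f x (EuclideanSpace.single i 1) = gradient f x i := by
  rw [← inner_gradient_left, EuclideanSpace.inner_single_right]
  simp

/-- The directional-derivative form of the divergence theorem for compactly supported functions. -/
lemma integral_fderiv_apply_eq_zero_s4 {d : ℕ} {F : EuclideanSpace ℝ (Fin d) → ℝ}
    (hF : ContDiff ℝ 1 F) (hs : HasCompactSupport F) (v : EuclideanSpace ℝ (Fin d)) :
    Integrable (fun x => fderiv ℝ F x v) ∧ ∫ x, fderiv ℝ F x v = 0 := by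
  have hcont : Continuous (fun x => fderiv ℝ F x v) :=
    (hF.continuous_fderiv one_ne_zero).clm_apply continuous_const
  have hint : Integrable (fun x => fderiv ℝ F x v) :=
    hcont.integrable_of_hasCompactSupport (hs.fderiv_apply (𝕜 := ℝ) v)
  refine ⟨hint, ?_⟩
  -- Integration by parts against the constant function `1`.
  have := integral_mul_fderiv_eq_neg_fderiv_mul_of_integrable (𝕜 := ℝ) (μ := volume)
    (f := fun _ : EuclideanSpace ℝ (Fin d) => (1 : ℝ)) (g := F) (v := v)
    (by simp) (by simpa using hint)
    (by simpa using hF.continuous.integrable_of_hasCompactSupport hs)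
    (fun x _ => differentiableAt_const _)
    (fun x _ => (hF.differentiable one_ne_zero) x)
  simpa using this

/-- Here `a = ‖∇f‖`, `b = ‖∇g‖`, `s = ⟪∇g, ∇f⟫`, `h = ‖∇²f‖`, `L = Δf`, `γ = g`,
`w = exp (-2f/β)` and `D` is the dimension, so the factor `w * (…)` in the last term is the
divergence of `g² w ∇f`. -/
lemma pointwise_bound {a b s h L D C β γ w : ℝ} (hD : 0 ≤ D)
    (hC : 0 < C) (hβ : 0 < β) (hw : 0 < w) (h0 : 0 ≤ h)
    (hs : |s| ≤ b * a) (hh : h ≤ C * (1 + a)) (hL : L ≤ D * h) :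
    h ^ 2 * γ ^ 2 * w ≤
      2 * C ^ 2 * (1 + max (2 * D * C * β + 2 * D ^ 2 * C ^ 2 * β ^ 2) (2 * β ^ 2)) *
        (γ ^ 2 * w + b ^ 2 * w) -
      2 * C ^ 2 * β * (w * (2 * γ * s - 2 / β * γ ^ 2 * a ^ 2 + γ ^ 2 * L)) := by
  set κ := max (2 * D * C * β + 2 * D ^ 2 * C ^ 2 * β ^ 2) (2 * β ^ 2) with hκ
  have hκ1 : 2 * D * C * β + 2 * D ^ 2 * C ^ 2 * β ^ 2 ≤ κ := le_max_left _ _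
  have hκ2 : 2 * β ^ 2 ≤ κ := le_max_right _ _
  have hs' : 2 * β * γ * s ≤ a ^ 2 * γ ^ 2 / 2 + 2 * β ^ 2 * b ^ 2 := by
    have h1 : γ * s ≤ |γ| * (b * a) := by
      calc γ * s ≤ |γ * s| := le_abs_self _
        _ = |γ| * |s| := abs_mul _ _
        _ ≤ _ := by gcongr
    have h2 : 2 * β * (γ * s) ≤ 2 * β * (|γ| * (b * a)) := by gcongr
    nlinarith [sq_nonneg (a * |γ| - 2 * β * b), sq_abs γ]
  have hL' : β * L ≤ D * C * β + D ^ 2 * C ^ 2 * β ^ 2 / 2 + a ^ 2 / 2 := by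
    have h1 : L ≤ D * (C * (1 + a)) := hL.trans (by gcongr)
    have h2 : β * L ≤ β * (D * (C * (1 + a))) := by gcongr
    nlinarith [sq_nonneg (a - D * C * β)]
  have hL'' : γ ^ 2 * (β * L) ≤
      γ ^ 2 * (D * C * β + D ^ 2 * C ^ 2 * β ^ 2 / 2 + a ^ 2 / 2) := by gcongr
  have hh' : h ^ 2 ≤ 2 * C ^ 2 * (1 + a ^ 2) := by
    have : h ^ 2 ≤ (C * (1 + a)) ^ 2 := by gcongr
    nlinarith [mul_nonneg (sq_nonneg C) (sq_nonneg (1 - a))]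
  have hh'' : h ^ 2 * γ ^ 2 ≤ 2 * C ^ 2 * (1 + a ^ 2) * γ ^ 2 := by gcongr
  have hκ1' : γ ^ 2 * (D * C * β + D ^ 2 * C ^ 2 * β ^ 2 / 2) ≤ γ ^ 2 * κ := by
    have h1 : 0 ≤ D * C * β := by positivity
    have h2 : 0 ≤ D ^ 2 * C ^ 2 * β ^ 2 := by positivity
    gcongr
    linarith
  have hκ2' : b ^ 2 * (2 * β ^ 2) ≤ b ^ 2 * κ := by gcongr
  have key : a ^ 2 * γ ^ 2 ≤ κ * (γ ^ 2 + b ^ 2) -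
      (2 * β * γ * s - 2 * γ ^ 2 * a ^ 2 + γ ^ 2 * (β * L)) := by
    nlinarith
  have key2 : h ^ 2 * γ ^ 2 ≤ 2 * C ^ 2 * ((1 + κ) * (γ ^ 2 + b ^ 2) -
      (2 * β * γ * s - 2 * γ ^ 2 * a ^ 2 + γ ^ 2 * (β * L))) := by
    have h1 : (1 + a ^ 2) * γ ^ 2 ≤ (1 + κ) * (γ ^ 2 + b ^ 2) -
      (2 * β * γ * s - 2 * γ ^ 2 * a ^ 2 + γ ^ 2 * (β * L)) := by
      nlinarith [sq_nonneg b]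
    calc h ^ 2 * γ ^ 2 ≤ 2 * C ^ 2 * ((1 + a ^ 2) * γ ^ 2) := by linarith
      _ ≤ _ := by gcongr
  calc h ^ 2 * γ ^ 2 * w ≤ 2 * C ^ 2 * ((1 + κ) * (γ ^ 2 + b ^ 2) -
      (2 * β * γ * s - 2 * γ ^ 2 * a ^ 2 + γ ^ 2 * (β * L))) * w := by gcongr
    _ = _ := by field_simp

/-- The divergence of `g² exp (-2f/β) ∇f`, computed coordinate by coordinate. -/
lemma sum_fderiv_eq {d : ℕ} {f g : EuclideanSpace ℝ (Fin d) → ℝ} (β : ℝ)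
    (hf : Differentiable ℝ f) (hgf : Differentiable ℝ (gradient f)) (hg : Differentiable ℝ g)
    (x : EuclideanSpace ℝ (Fin d)) :
    ∑ i, fderiv ℝ (fun y => g y ^ 2 * Real.exp (-2 * f y / β) * gradient f y i) x
        (EuclideanSpace.single i 1) =
      Real.exp (-2 * f x / β) * (2 * g x * inner ℝ (gradient g x) (gradient f x)
        - 2 / β * g x ^ 2 * ‖gradient f x‖ ^ 2
        + g x ^ 2 * ∑ i, fderiv ℝ (gradient f) x (EuclideanSpace.single i 1) i) := by
  have hi : ∀ i, fderiv ℝ (fun y => g y ^ 2 * Real.exp (-2 * f y / β) * gradient f y i) x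
        (EuclideanSpace.single i 1) =
      Real.exp (-2 * f x / β) * (2 * g x * (gradient g x i * gradient f x i)
        - 2 / β * g x ^ 2 * gradient f x i ^ 2
        + g x ^ 2 * fderiv ℝ (gradient f) x (EuclideanSpace.single i 1) i) := by
    intro i
    have h1 : HasFDerivAt (fun y => gradient f y i)
        ((EuclideanSpace.proj i : EuclideanSpace ℝ (Fin d) →L[ℝ] ℝ).comp
          (fderiv ℝ (gradient f) x)) x :=
      (EuclideanSpace.proj i : EuclideanSpace ℝ (Fin d) →L[ℝ] ℝ).hasFDerivAt.comp x
        (hgf x).hasFDerivAt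
    have h2 : HasFDerivAt (fun y => Real.exp (-2 / β * f y))
        (Real.exp (-2 / β * f x) • ((-2 / β) • fderiv ℝ f x)) x :=
      ((hf x).hasFDerivAt.const_mul (-2 / β)).exp
    have h3 := (hg x).hasFDerivAt.pow 2
    have h := ((h3.mul h2).mul h1).fderiv
    have e : (fun y => g y ^ 2 * Real.exp (-2 * f y / β) * gradient f y i) =
        (fun y => g y ^ 2) * (fun y => Real.exp (-2 / β * f y)) * (fun y => gradient f y i) := by
      funext y
      simp only [Pi.mul_apply]
      congr 3
      ring
    have e2 : -2 * f x / β = -2 / β * f x := by ring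
    rw [e, e2]
    erw [h]
    simp [gradient_apply_eq_fderiv]
    ring
  rw [Finset.sum_congr rfl fun i _ => hi i, ← Finset.mul_sum, Finset.sum_add_distrib,
    Finset.sum_sub_distrib, ← Finset.mul_sum, ← Finset.mul_sum, ← Finset.mul_sum,
    EuclideanSpace.real_norm_sq_eq, PiLp.inner_apply]
  simp [mul_comm]

/-- Relative bound, part (ii) (Villani's Lemma A.24): under the Villani condition
`‖∇²f(x)‖₂ ≤ C(1 + ‖∇f(x)‖)`, for every smooth compactly supported `g`,
`∫ ‖∇²f‖₂² g² dν ≤ κ₂ (∫ g² dν + ∫ ‖∇g‖² dν)` with `κ₂ = 2C²(1 + κ₁)`,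
`κ₁ = max (2dCβ + 2d²C²β²) (2β²)` and `dν = e^{-2f/β} dx`. -/
theorem relative_bound_ii {d : ℕ} (f : EuclideanSpace ℝ (Fin d) → ℝ)
    (hf : ContDiff ℝ 2 f) (C : ℝ) (hC : 0 < C)
    (hvillani : ∀ x, ‖fderiv ℝ (gradient f) x‖ ≤ C * (1 + ‖gradient f x‖))
    (β : ℝ) (hβ : 0 < β)
    (hν_fin : Integrable (fun x => Real.exp (-2 * f x / β)))
    (g : EuclideanSpace ℝ (Fin d) → ℝ) (hg : ContDiff ℝ (⊤ : ℕ∞) g)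
    (hg_supp : HasCompactSupport g) :
    ∫ x, ‖fderiv ℝ (gradient f) x‖ ^ 2 * g x ^ 2 * Real.exp (-2 * f x / β) ≤
      2 * C ^ 2 *
          (1 + max (2 * (d : ℝ) * C * β + 2 * (d : ℝ) ^ 2 * C ^ 2 * β ^ 2) (2 * β ^ 2)) *
        ((∫ x, g x ^ 2 * Real.exp (-2 * f x / β)) +
          ∫ x, ‖gradient g x‖ ^ 2 * Real.exp (-2 * f x / β)) := by
  have hgf : ContDiff ℝ 1 (gradient f) := contDiff_gradient_of_succ (by simpa [one_add_one_eq_two])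
  have hg1 : ContDiff ℝ 1 g := hg.of_le (by exact_mod_cast le_top)
  have hgg : Continuous (gradient g) :=
    (contDiff_gradient_of_succ (n := 0) (by simpa using hg1)).continuous
  have hf1 : ContDiff ℝ 1 f := hf.of_le (by norm_num)
  have hw : ContDiff ℝ 1 (fun x => Real.exp (-2 * f x / β)) :=
    ((contDiff_const.mul hf1).div_const β).exp
  have hH : Continuous (fderiv ℝ (gradient f)) := hgf.continuous_fderiv one_ne_zero
  have hg0 : ∀ x, x ∉ tsupport g → g x = 0 := fun x => image_eq_zero_of_notMem_tsupport
  have hgg0 : ∀ x, x ∉ tsupport g → gradient g x = 0 := by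
    intro x hx
    have : fderiv ℝ g x = 0 :=
      Function.notMem_support.1 fun h => hx (support_fderiv_subset ℝ h)
    simp [gradient, this]
  have hI : ∀ u : EuclideanSpace ℝ (Fin d) → ℝ, Continuous u →
      (∀ x, x ∉ tsupport g → u x = 0) → Integrable u := fun u hu h0 =>
    hu.integrable_of_hasCompactSupport (HasCompactSupport.intro hg_supp h0)
  let F : Fin d → EuclideanSpace ℝ (Fin d) → ℝ := fun i y =>
    g y ^ 2 * Real.exp (-2 * f y / β) * gradient f y i
  have hF : ∀ i, Integrable (fun x => fderiv ℝ (F i) x (EuclideanSpace.single i 1)) ∧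
      ∫ x, fderiv ℝ (F i) x (EuclideanSpace.single i 1) = 0 := by
    intro i
    refine integral_fderiv_apply_eq_zero_s4 ?_ (HasCompactSupport.intro hg_supp fun x hx => ?_) _
    · have hi : ContDiff ℝ 1 (fun y => gradient f y i) :=
        (EuclideanSpace.proj i : EuclideanSpace ℝ (Fin d) →L[ℝ] ℝ).contDiff.comp hgf
      exact ((hg1.pow 2).mul hw).mul hi
    · simp [F, hg0 x hx]
  have hdiv0 : ∫ x, ∑ i, fderiv ℝ (F i) x (EuclideanSpace.single i 1) = 0 := by
    rw [integral_finsetSum _ fun i _ => (hF i).1]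
    exact Finset.sum_eq_zero fun i _ => (hF i).2
  have hdivI : Integrable fun x => ∑ i, fderiv ℝ (F i) x (EuclideanSpace.single i 1) :=
    integrable_finsetSum _ fun i _ => (hF i).1
  have hI1 : Integrable fun x => g x ^ 2 * Real.exp (-2 * f x / β) :=
    hI _ ((hg1.continuous.pow 2).mul hw.continuous) fun x hx => by simp [hg0 x hx]
  have hI2 : Integrable fun x => ‖gradient g x‖ ^ 2 * Real.exp (-2 * f x / β) :=
    hI _ ((hgg.norm.pow 2).mul hw.continuous) fun x hx => by simp [hgg0 x hx]
  have hI12 : Integrable fun x =>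
      g x ^ 2 * Real.exp (-2 * f x / β) + ‖gradient g x‖ ^ 2 * Real.exp (-2 * f x / β) :=
    hI1.add hI2
  have hI3 : Integrable fun x =>
      ‖fderiv ℝ (gradient f) x‖ ^ 2 * g x ^ 2 * Real.exp (-2 * f x / β) :=
    hI _ (((hH.norm.pow 2).mul (hg1.continuous.pow 2)).mul hw.continuous)
      fun x hx => by simp [hg0 x hx]
  have hmono := integral_mono hI3
    ((hI12.const_mul (2 * C ^ 2 *
      (1 + max (2 * (d : ℝ) * C * β + 2 * (d : ℝ) ^ 2 * C ^ 2 * β ^ 2) (2 * β ^ 2)))).sub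
      (hdivI.const_mul (2 * C ^ 2 * β))) (fun x => by
    simp only [Pi.sub_apply, F]
    rw [sum_fderiv_eq β (hf1.differentiable one_ne_zero) (hgf.differentiable one_ne_zero)
      (hg1.differentiable one_ne_zero) x]
    refine pointwise_bound (Nat.cast_nonneg d) hC hβ (Real.exp_pos _) (norm_nonneg _)
      (abs_real_inner_le_norm _ _) (hvillani x) ?_
    -- Each diagonal entry of the Hessian is at most its operator norm.
    calc ∑ i, fderiv ℝ (gradient f) x (EuclideanSpace.single i 1) i
        ≤ ∑ _i : Fin d, ‖fderiv ℝ (gradient f) x‖ := by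
          refine Finset.sum_le_sum fun i _ => ?_
          refine (Real.le_norm_self _).trans ((PiLp.norm_apply_le _ i).trans ?_)
          refine ((fderiv ℝ (gradient f) x).le_opNorm _).trans ?_
          simp
      _ = _ := by simp)
  refine hmono.trans_eq ?_
  simp only [Pi.sub_apply]
  rw [integral_sub (hI12.const_mul _) (hdivI.const_mul _), integral_const_mul,
    integral_const_mul, hdiv0, integral_add hI1 hI2]
  ring
end

section
/- Let f : ℝ^d → ℝ be twice continuously differentiable, s > 0, α ∈ (0,1), β = s(1+α)/(2(1−α)), and √μ_c = (1−α)/((1+α)√s) (so that √s/β = 2√μ_c). Define ρ(x,v) = exp(−(2f(x)+‖v‖²)/β) on ℝ^d × ℝ^d. Then ρ is a pointwise stationary solution of the hp-dependent kinetic Fokker–Planck equation: for every (x,v) ∈ ℝ^d × ℝ^d, −v·∇_x ρ(x,v) + ∇f(x)·∇_v ρ(x,v) + 2√μ_c · div_v( v ρ(x,v) ) + (√s/2) Δ_v ρ(x,v) = 0. -/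
/-!
Both velocity and position gradients of the Gibbs density are multiples of the density,
`∇_x ρ = -(2/β) ρ ∇f` and `∇_v ρ = -(2/β) ρ v`, so the two transport terms cancel by symmetry of
the inner product. Moreover `Δ_v ρ = div_v (∇_v ρ) = -(2/β) div_v (v ρ)`, so the friction and
diffusion terms add up to `(2√μ - √s/β) div_v (v ρ)`, and `√s/β = 2√μ` by the choice of
parameters.
-/

open scoped RealInnerProductSpace

noncomputable section

/-- The (unnormalized) Gibbs density `ρ(x,v) = e^{-(2f(x)+‖v‖²)/β}`. -/
def gibbsDensity {d : ℕ} (f : EuclideanSpace ℝ (Fin d) → ℝ) (β : ℝ)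
    (p : EuclideanSpace ℝ (Fin d) × EuclideanSpace ℝ (Fin d)) : ℝ :=
  Real.exp (-(2 * f p.1 + ‖p.2‖ ^ 2) / β)

lemma fderiv_gibbsDensity_position {d : ℕ} {f : EuclideanSpace ℝ (Fin d) → ℝ} (β : ℝ)
    {x : EuclideanSpace ℝ (Fin d)} (hf : DifferentiableAt ℝ f x)
    (v h : EuclideanSpace ℝ (Fin d)) :
    fderiv ℝ (fun y => gibbsDensity f β (y, v)) x h =
      -(2 / β) * gibbsDensity f β (x, v) * fderiv ℝ f x h := by
  have hd : HasFDerivAt (fun y => gibbsDensity f β (y, v)) _ x :=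
    ((((hf.hasFDerivAt.const_mul 2).add_const (‖v‖ ^ 2)).neg).mul_const β⁻¹).exp
  rw [hd.fderiv]
  simp [gibbsDensity, div_eq_mul_inv]
  ring

lemma fderiv_gibbsDensity_velocity {d : ℕ} (f : EuclideanSpace ℝ (Fin d) → ℝ) (β : ℝ)
    (x v h : EuclideanSpace ℝ (Fin d)) :
    fderiv ℝ (fun w => gibbsDensity f β (x, w)) v h =
      -(2 / β) * gibbsDensity f β (x, v) * ⟪v, h⟫ := by
  have hd : HasFDerivAt (fun w => gibbsDensity f β (x, w)) _ v :=
    (((((hasStrictFDerivAt_norm_sq v).hasFDerivAt).const_add (2 * f x)).neg).mul_const β⁻¹).exp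
  rw [hd.fderiv]
  simp [gibbsDensity, div_eq_mul_inv]
  ring

/-- The `j`-th term of `Δ_v ρ = -(2/β) div_v (v ρ)`. -/
lemma fderiv_fderiv_gibbsDensity_velocity {d : ℕ} (f : EuclideanSpace ℝ (Fin d) → ℝ) (β : ℝ)
    (x v : EuclideanSpace ℝ (Fin d)) (j : Fin d) :
    fderiv ℝ
        (fun w => fderiv ℝ (fun u => gibbsDensity f β (x, u)) w (EuclideanSpace.single j 1))
        v (EuclideanSpace.single j 1) =
      -(2 / β) *
        fderiv ℝ (fun w => w j * gibbsDensity f β (x, w)) v (EuclideanSpace.single j 1) := by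
  have hfun : (fun w => fderiv ℝ (fun u => gibbsDensity f β (x, u)) w
      (EuclideanSpace.single j 1)) =
      (-(2 / β)) • (fun w : EuclideanSpace ℝ (Fin d) => w j * gibbsDensity f β (x, w)) := by
    funext w
    rw [fderiv_gibbsDensity_velocity]
    simp [EuclideanSpace.inner_single_right]
    ring
  rw [hfun, fderiv_const_smul_field]
  simp

/-- The Gibbs density `ρ(x,v) = e^{-(2f(x)+‖v‖²)/β}` with `β = s(1+α)/(2(1−α))` and
`√μ = (1−α)/((1+α)√s)` is a pointwise stationary solution of the hp-dependent kinetic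
Fokker–Planck equation:
`−v·∇_x ρ + ∇f·∇_v ρ + 2√μ div_v(v ρ) + (√s/2) Δ_v ρ = 0`. -/
theorem gibbs_stationary {d : ℕ} (f : EuclideanSpace ℝ (Fin d) → ℝ)
    (hf : ContDiff ℝ 2 f) (s α β sqμ : ℝ) (hs : 0 < s)
    (hα : α ∈ Set.Ioo (0 : ℝ) 1)
    (hβ : β = s * (1 + α) / (2 * (1 - α)))
    (hsqμ : sqμ = (1 - α) / ((1 + α) * Real.sqrt s)) :
    ∀ x v : EuclideanSpace ℝ (Fin d),
      -⟪v, gradient (fun y => gibbsDensity f β (y, v)) x⟫ +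
        ⟪gradient f x, gradient (fun w => gibbsDensity f β (x, w)) v⟫ +
        2 * sqμ *
          (∑ j : Fin d,
            fderiv ℝ (fun w => w j * gibbsDensity f β (x, w)) v (EuclideanSpace.single j 1)) +
        Real.sqrt s / 2 *
          (∑ j : Fin d,
            fderiv ℝ
              (fun w => fderiv ℝ (fun u => gibbsDensity f β (x, u)) w (EuclideanSpace.single j 1))
              v (EuclideanSpace.single j 1)) = 0 := by
  intro x v
  obtain ⟨hα0, hα1⟩ := hα
  have hfx : DifferentiableAt ℝ f x := (hf.differentiable (by norm_num)).differentiableAt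
  have hpos : ⟪v, gradient (fun y => gibbsDensity f β (y, v)) x⟫ =
      -(2 / β) * gibbsDensity f β (x, v) * fderiv ℝ f x v := by
    rw [← fderiv_gibbsDensity_position β hfx v v, real_inner_comm, gradient,
      InnerProductSpace.toDual_symm_apply]
  have hvel : ⟪gradient f x, gradient (fun w => gibbsDensity f β (x, w)) v⟫ =
      -(2 / β) * gibbsDensity f β (x, v) * fderiv ℝ f x v := by
    rw [real_inner_comm, gradient, InnerProductSpace.toDual_symm_apply,
      fderiv_gibbsDensity_velocity, real_inner_comm, gradient,
      InnerProductSpace.toDual_symm_apply]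
  -- The fluctuation-dissipation relation `√s / β = 2√μ`.
  have hrel : Real.sqrt s / β = 2 * sqμ := by
    have hs' : 0 < Real.sqrt s := Real.sqrt_pos.2 hs
    have h1 : 0 < 1 - α := by linarith
    have h2 : 0 < 1 + α := by linarith
    rw [hβ, hsqμ]
    field_simp
    rw [Real.sq_sqrt hs.le]
  simp_rw [fderiv_fderiv_gibbsDensity_velocity]
  rw [hpos, hvel, ← Finset.mul_sum, ← hrel]
  ring

end
end

section
/- Fix constants H > 0, v > 0, γ > 0 and α ∈ (1/3, 1). For s > 0 define μ_c(s) = (1−α)²/((1+α)² s), λ_s = v γ exp(−2H/s), and Λ_{s,α} = v γ ( √(μ_c(s)) + √(μ_c(s) + v) )^{−1} exp( −(2H/s)·(2(1−α)/(1+α)) ). Then the ratio Λ_{s,α} / λ_s tends to +∞ as s → 0⁺. -/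
/-! Writing `x = 1/s`, the ratio equals `exp (b x) / (√(k x) + √(k x + v))` with
`b = 2H(3α-1)/(1+α)` and `k = ((1-α)/(1+α))²`. Since `α > 1/3`, the rate `b` is positive, while
the crude bound `√y ≤ 1 + y` makes the denominator at most `(2k + v + 2) x` for `x ≥ 1`.
The exponential beats this linear growth. -/

open Filter

/-- Divergence of the rate ratio (Section 3.2): for momentum coefficient `α > 1/3`,
the ratio `Λ_{s,α}/λ_s` between the exponential decay constant of SGD with momentum,
`Λ_{s,α} = vγ (√μ(s) + √(μ(s)+v))⁻¹ e^{−(2H/s)·2(1−α)/(1+α)}` with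
`μ(s) = (1−α)²/((1+α)² s)`, and that of SGD, `λ_s = vγ e^{−2H/s}`, tends to `+∞`
as `s → 0⁺`. -/
theorem momentum_rate_ratio_tendsto_atTop (H v γ α : ℝ)
    (hH : 0 < H) (hv : 0 < v) (hγ : 0 < γ)
    (hα : α ∈ Set.Ioo (1 / 3 : ℝ) 1) :
    Tendsto
      (fun s : ℝ =>
        (v * γ *
            (Real.sqrt ((1 - α) ^ 2 / ((1 + α) ^ 2 * s)) +
                Real.sqrt ((1 - α) ^ 2 / ((1 + α) ^ 2 * s) + v))⁻¹ *
            Real.exp (-(2 * H / s) * (2 * (1 - α) / (1 + α)))) /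
          (v * γ * Real.exp (-(2 * H / s))))
      (nhdsWithin 0 (Set.Ioi 0)) atTop := by
  obtain ⟨h1, h2⟩ := hα
  have hα' : 0 < 1 + α := by linarith
  set k : ℝ := (1 - α) ^ 2 / (1 + α) ^ 2 with hk
  set b : ℝ := 2 * H * (3 * α - 1) / (1 + α) with hb
  have hk0 : 0 ≤ k := by positivity
  have hb0 : 0 < b := div_pos (mul_pos (by linarith) (by linarith)) hα'
  have hC : 0 < 2 * k + v + 2 := by linarith
  have hsqrt : ∀ y : ℝ, 0 ≤ y → Real.sqrt y ≤ 1 + y := fun y hy =>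
    Real.sqrt_le_iff.2 ⟨by linarith, by nlinarith⟩
  have hlim : Tendsto (fun s : ℝ => (2 * k + v + 2)⁻¹ * (Real.exp (b * s⁻¹) / s⁻¹ ^ (1 : ℝ)))
      (nhdsWithin 0 (Set.Ioi 0)) atTop :=
    ((tendsto_exp_mul_div_rpow_atTop 1 b hb0).comp tendsto_inv_nhdsGT_zero).const_mul_atTop
      (inv_pos.2 hC)
  refine tendsto_atTop_mono' _ ?_ hlim
  filter_upwards [self_mem_nhdsWithin, tendsto_inv_nhdsGT_zero.eventually_ge_atTop (1 : ℝ)]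
    with s hs hx
  have hs : 0 < s := hs
  have hμ : (1 - α) ^ 2 / ((1 + α) ^ 2 * s) = k * s⁻¹ := by
    rw [hk]; field_simp
  have hexp : Real.exp (-(2 * H / s) * (2 * (1 - α) / (1 + α))) =
      Real.exp (b * s⁻¹) * Real.exp (-(2 * H / s)) := by
    rw [← Real.exp_add, hb]
    congr 1
    field_simp
    ring
  rw [hμ, hexp, Real.rpow_one]
  have hkx : 0 ≤ k * s⁻¹ := by positivity
  have hpos : 0 < Real.sqrt (k * s⁻¹) + Real.sqrt (k * s⁻¹ + v) :=
    add_pos_of_nonneg_of_pos (Real.sqrt_nonneg _) (Real.sqrt_pos.2 (by linarith))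
  have hden : Real.sqrt (k * s⁻¹) + Real.sqrt (k * s⁻¹ + v) ≤ (2 * k + v + 2) * s⁻¹ := by
    have e1 := hsqrt _ hkx
    have e2 := hsqrt (k * s⁻¹ + v) (by linarith)
    nlinarith
  have hE := Real.exp_pos (-(2 * H / s))
  calc (2 * k + v + 2)⁻¹ * (Real.exp (b * s⁻¹) / s⁻¹)
      = ((2 * k + v + 2) * s⁻¹)⁻¹ * Real.exp (b * s⁻¹) := by
        rw [mul_inv, div_eq_mul_inv]; ring
    _ ≤ (Real.sqrt (k * s⁻¹) + Real.sqrt (k * s⁻¹ + v))⁻¹ * Real.exp (b * s⁻¹) := by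
        gcongr
    _ = _ := by
        generalize (Real.sqrt (k * s⁻¹) + Real.sqrt (k * s⁻¹ + v))⁻¹ = D
        rw [eq_div_iff (by positivity)]
        ring
end

section
/- Fix H > 0 and α ∈ (1/3, 1), and set p = 2(1−α)/(1+α) ∈ (0,1). Then there exist s₀ > 0 and constants C₁, C₂ ∈ (0,1) such that for all 0 < s₁ < s₂ ≤ s₀, writing r = exp(−2H/s₁)/exp(−2H/s₂) (so 0 < r < 1): r^{C₁} ≤ √(s₁/s₂) · r^{p} ≤ r^{C₂}. -/
/-!
Write `r = exp (-D)` with `D = 2H (1/s₁ - 1/s₂) = (2H/s₂) (s₂/s₁ - 1)`. Since `√(s₁/s₂) ≤ 1`, the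
upper bound holds with `C₂ = p`. For the lower bound, `log (s₂/s₁) ≤ s₂/s₁ - 1 = D s₂/(2H)`, so
for `s₂ ≤ 2H (1 - p)` one has `√(s₁/s₂) ≥ exp (-D (1 - p)/2) = r ^ ((1 - p)/2)`; hence
`C₁ = p + (1 - p)/2` works. The condition `α > 1/3` is exactly `p < 1`.
-/

/-- Robustness claim of Section 3.2: fix `H > 0` and `α ∈ (1/3, 1)` and set
`p = 2(1−α)/(1+α) ∈ (0,1)`. There exist `s₀ > 0` and constants `C₁, C₂ ∈ (0,1)` such
that for all `0 < s₁ < s₂ ≤ s₀`, writing `r = e^{−2H/s₁}/e^{−2H/s₂}`: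
`r^{C₁} ≤ √(s₁/s₂) · r^p ≤ r^{C₂}`. -/
theorem momentum_rate_ratio_robust (H α p : ℝ) (hH : 0 < H)
    (hα : α ∈ Set.Ioo (1 / 3 : ℝ) 1)
    (hp : p = 2 * (1 - α) / (1 + α)) :
    ∃ s₀ > (0 : ℝ), ∃ C₁ ∈ Set.Ioo (0 : ℝ) 1, ∃ C₂ ∈ Set.Ioo (0 : ℝ) 1,
      ∀ s₁ s₂ : ℝ, 0 < s₁ → s₁ < s₂ → s₂ ≤ s₀ →
        (Real.exp (-(2 * H) / s₁) / Real.exp (-(2 * H) / s₂)) ^ C₁ ≤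
            Real.sqrt (s₁ / s₂) *
              (Real.exp (-(2 * H) / s₁) / Real.exp (-(2 * H) / s₂)) ^ p ∧
          Real.sqrt (s₁ / s₂) *
              (Real.exp (-(2 * H) / s₁) / Real.exp (-(2 * H) / s₂)) ^ p ≤
            (Real.exp (-(2 * H) / s₁) / Real.exp (-(2 * H) / s₂)) ^ C₂ := by
  obtain ⟨hα1, hα2⟩ := hα
  have hp0 : 0 < p := by
    rw [hp]
    exact div_pos (by linarith) (by linarith)
  have hp1 : p < 1 := by
    rw [hp, div_lt_one (by linarith)]
    linarith
  refine ⟨2 * H * (1 - p), mul_pos (by linarith) (by linarith), p + (1 - p) / 2,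
    ⟨by linarith, by linarith⟩, p, ⟨hp0, hp1⟩, fun s₁ s₂ h1 h12 h2 => ?_⟩
  have h2pos : 0 < s₂ := h1.trans h12
  rw [← Real.exp_sub]
  set E : ℝ := -(2 * H) / s₁ - -(2 * H) / s₂ with hE
  have hrp : 0 < Real.exp E ^ p := Real.rpow_pos_of_pos (Real.exp_pos E) p
  constructor
  · rw [Real.rpow_add (Real.exp_pos E), mul_comm]
    refine mul_le_mul_of_nonneg_right ?_ hrp.le
    have hq : 0 < s₁ / s₂ := div_pos h1 h2pos
    rw [← Real.exp_mul, Real.sqrt_eq_rpow, Real.rpow_def_of_pos hq, Real.exp_le_exp]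
    have hlog : 1 - (s₁ / s₂)⁻¹ ≤ Real.log (s₁ / s₂) := Real.one_sub_inv_le_log_of_pos hq
    -- The choice of `s₀` makes `2H (1 - p) / s₂ ≥ 1`, while `1 - s₂/s₁` is negative.
    have hkey : E * (1 - p) ≤ 1 - (s₁ / s₂)⁻¹ := by
      have hEq : E * (1 - p) = (2 * H * (1 - p) / s₂) * (1 - (s₁ / s₂)⁻¹) := by
        rw [hE]
        field_simp
        ring
      have hone : 1 ≤ 2 * H * (1 - p) / s₂ := (one_le_div h2pos).2 h2
      have hneg : 1 - (s₁ / s₂)⁻¹ ≤ 0 := by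
        rw [inv_div, sub_nonpos]
        exact (one_le_div h1).2 h12.le
      rw [hEq]
      nlinarith
    linarith
  · refine mul_le_of_le_one_left hrp.le ?_
    rw [Real.sqrt_le_one]
    exact (div_le_one h2pos).2 h12.le
end
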